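/- For an almost hyperHermitian manifold (M, I, J, K, g) the following three conditions are equivalent: (1) M is an HKT-manifold; (2) I dω_I = J dω_J = K dω_K; (3) β_I = β_J = β_K. In particular, condition (2) alone implies the integrability of I, J and K. -/

import Mathlib

/-!  Synthetic (Koszul-style) model of an almost quaternion-Hermitian `4n`-manifold.

`C` plays the role of the commutative ℝ-algebra of smooth functions and `V` that of
the `C`-module of vector fields, equipped with a directional derivative `D`, a Lie
bracket, a Riemannian metric `g` together with its Levi-Civita connection `nab`
(characterised by being torsion-free and metric), a local adapted basis `I, J, K`
of anticommuting almost complex structures with `K = I J`, each compatible with the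
metric, and a (local) orthonormal frame.  -/

noncomputable section

open scoped BigOperators

structure AQH (n : ℕ) (C : Type*) (V : Type*) [CommRing C] [Algebra ℝ C]
    [AddCommGroup V] [Module C V] where
  /-- derivative of a function along a vector field -/
  D : V → C → C
  D_add : ∀ X f g, D X (f + g) = D X f + D X g
  D_mul : ∀ X f g, D X (f * g) = f * D X g + g * D X f
  D_const : ∀ X (r : ℝ), D X (algebraMap ℝ C r) = 0
  D_addX : ∀ X Y f, D (X + Y) f = D X f + D Y f
  D_smulX : ∀ (f : C) (X : V) (h : C), D (f • X) h = f * D X h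
  /-- the Lie bracket of vector fields -/
  bracket : V → V → V
  bracket_skew : ∀ X Y, bracket X Y = -bracket Y X
  bracket_add : ∀ X Y Z, bracket X (Y + Z) = bracket X Y + bracket X Z
  bracket_smul : ∀ X (f : C) Y, bracket X (f • Y) = f • bracket X Y + (D X f) • Y
  bracket_jacobi : ∀ X Y Z,
    bracket X (bracket Y Z) + bracket Y (bracket Z X) + bracket Z (bracket X Y) = 0
  D_bracket : ∀ X Y f, D (bracket X Y) f = D X (D Y f) - D Y (D X f)
  /-- the Riemannian metric -/
  g : V → V → C
  g_symm : ∀ X Y, g X Y = g Y X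
  g_add : ∀ X Y Z, g (X + Y) Z = g X Z + g Y Z
  g_smul : ∀ (f : C) X Y, g (f • X) Y = f * g X Y
  /-- the Levi-Civita connection -/
  nab : V → V → V
  nab_addX : ∀ X Y Z, nab (X + Y) Z = nab X Z + nab Y Z
  nab_smulX : ∀ (f : C) X Y, nab (f • X) Y = f • nab X Y
  nab_add : ∀ X Y Z, nab X (Y + Z) = nab X Y + nab X Z
  nab_leibniz : ∀ X (f : C) Y, nab X (f • Y) = f • nab X Y + (D X f) • Y
  torsion_free : ∀ X Y, nab X Y - nab Y X = bracket X Y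
  nab_metric : ∀ X Y Z, D X (g Y Z) = g (nab X Y) Z + g Y (nab X Z)
  /-- the (local) adapted basis of almost complex structures -/
  I : V → V
  J : V → V
  K : V → V
  I_lin : ∀ (f : C) X Y, I (f • X + Y) = f • I X + I Y
  J_lin : ∀ (f : C) X Y, J (f • X + Y) = f • J X + J Y
  K_lin : ∀ (f : C) X Y, K (f • X + Y) = f • K X + K Y
  I_sq : ∀ X, I (I X) = -X
  J_sq : ∀ X, J (J X) = -X
  K_def : ∀ X, K X = I (J X)
  anticomm : ∀ X, I (J X) = -J (I X)
  I_metric : ∀ X Y, g (I X) (I Y) = g X Y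
  J_metric : ∀ X Y, g (J X) (J Y) = g X Y
  /-- a (local) orthonormal frame -/
  frame : Fin (4 * n) → V
  frame_orthonormal : ∀ i j, g (frame i) (frame j) = if i = j then 1 else 0
  frame_span : ∀ X, X = ∑ i, g X (frame i) • frame i

namespace AQH

section ops

variable {C V : Type*} [CommRing C]

/-- the operator `A_(1)` on covariant 3-tensors -/
def op1 (A : V → V) (ψ : V → V → V → C) : V → V → V → C := fun X Y Z => -ψ (A X) Y Z

/-- the operator `A_(2)` on covariant 3-tensors -/
def op2 (A : V → V) (ψ : V → V → V → C) : V → V → V → C := fun X Y Z => -ψ X (A Y) Z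

/-- the operator `A_(3)` on covariant 3-tensors -/
def op3 (A : V → V) (ψ : V → V → V → C) : V → V → V → C := fun X Y Z => -ψ X Y (A Z)

/-- the operator `A_(12) = A_(1) A_(2)` on covariant 3-tensors -/
def op12 (A : V → V) (ψ : V → V → V → C) : V → V → V → C := fun X Y Z => ψ (A X) (A Y) Z

/-- the operator `A_(13) = A_(1) A_(3)` on covariant 3-tensors -/
def op13 (A : V → V) (ψ : V → V → V → C) : V → V → V → C := fun X Y Z => ψ (A X) Y (A Z)

/-- the operator `A_(23) = A_(2) A_(3)` on covariant 3-tensors -/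
def op23 (A : V → V) (ψ : V → V → V → C) : V → V → V → C := fun X Y Z => ψ X (A Y) (A Z)

/-- the operator `𝓛_A = A_(12) + A_(13) + A_(23)` on three-forms -/
def calL (A : V → V) (ψ : V → V → V → C) : V → V → V → C :=
  fun X Y Z => op12 A ψ X Y Z + op13 A ψ X Y Z + op23 A ψ X Y Z

/-- the action `(A ν)(X) = -ν (A X)` of `A` on a one-form -/
def act1 (A : V → V) (ν : V → C) : V → C := fun X => -ν (A X)

/-- the action `(A ψ)(X,Y,Z) = -ψ(AX,AY,AZ)` of `A` on a three-form -/
def act3 (A : V → V) (ψ : V → V → V → C) : V → V → V → C :=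
  fun X Y Z => -ψ (A X) (A Y) (A Z)

/-- wedge product of two one-forms -/
def wedge11 (α β : V → C) : V → V → C := fun X Y => α X * β Y - α Y * β X

/-- wedge product of a one-form and a two-form -/
def wedge12 (ν : V → C) (ω : V → V → C) : V → V → V → C :=
  fun X Y Z => ν X * ω Y Z - ν Y * ω X Z + ν Z * ω X Y

/-- wedge product of two two-forms -/
def wedge22 (α β : V → V → C) : V → V → V → V → C := fun X Y Z W =>
  α X Y * β Z W - α X Z * β Y W + α X W * β Y Z
    + α Z W * β X Y - α Y W * β X Z + α Y Z * β X W

/-- a (0,3)-tensor is an alternating three-form -/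
def IsAlt3 (T : V → V → V → C) : Prop :=
  (∀ X Y Z, T Y X Z = -T X Y Z) ∧ (∀ X Y Z, T X Z Y = -T X Y Z)

variable [AddCommGroup V] [Module C V]

/-- `C`-linearity (tensoriality) of a three-form in its first argument -/
def Lin3 (T : V → V → V → C) : Prop :=
  ∀ (f : C) X X' Y Z, T (f • X + X') Y Z = f * T X Y Z + T X' Y Z

/-- `C`-linearity (tensoriality) of a one-form -/
def Lin1 (ν : V → C) : Prop := ∀ (f : C) X X', ν (f • X + X') = f * ν X + ν X'

end ops

section derived

variable {n : ℕ} {C V : Type*} [CommRing C] [Algebra ℝ C] [AddCommGroup V] [Module C V]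
  [Module ℝ V] [IsScalarTower ℝ C V]

variable (M : AQH n C V)

/-- the Kähler form `ω_A(X,Y) = g(X, A Y)` -/
def omega (A : V → V) : V → V → C := fun X Y => M.g X (A Y)

/-- `(∇_X A) Y` -/
def nabA (A : V → V) : V → V → V := fun X Y => M.nab X (A Y) - A (M.nab X Y)

/-- covariant derivative of a 2-form: `(∇_X ψ)(Y,Z)` -/
def nab2 (ψ : V → V → C) : V → V → V → C :=
  fun X Y Z => M.D X (ψ Y Z) - ψ (M.nab X Y) Z - ψ Y (M.nab X Z)

/-- covariant derivative of a 4-form -/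
def nab4 (ψ : V → V → V → V → C) : V → V → V → V → V → C :=
  fun X Y Z W U => M.D X (ψ Y Z W U) - ψ (M.nab X Y) Z W U - ψ Y (M.nab X Z) W U
    - ψ Y Z (M.nab X W) U - ψ Y Z W (M.nab X U)

/-- exterior derivative of a one-form -/
def d1 (ν : V → C) : V → V → C :=
  fun X Y => M.D X (ν Y) - M.D Y (ν X) - ν (M.bracket X Y)

/-- exterior derivative of a two-form -/
def d2 (ψ : V → V → C) : V → V → V → C :=
  fun X Y Z => M.D X (ψ Y Z) - M.D Y (ψ X Z) + M.D Z (ψ X Y)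
    - ψ (M.bracket X Y) Z + ψ (M.bracket X Z) Y - ψ (M.bracket Y Z) X

/-- exterior derivative of a four-form -/
def d4 (ψ : V → V → V → V → C) : V → V → V → V → V → C := fun X Y Z W U =>
  M.D X (ψ Y Z W U) - M.D Y (ψ X Z W U) + M.D Z (ψ X Y W U) - M.D W (ψ X Y Z U)
      + M.D U (ψ X Y Z W)
    - ψ (M.bracket X Y) Z W U + ψ (M.bracket X Z) Y W U - ψ (M.bracket X W) Y Z U
      + ψ (M.bracket X U) Y Z W
    - ψ (M.bracket Y Z) X W U + ψ (M.bracket Y W) X Z U - ψ (M.bracket Y U) X Z W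
    - ψ (M.bracket Z W) X Y U + ψ (M.bracket Z U) X Y W
    - ψ (M.bracket W U) X Y Z

/-- the Nijenhuis tensor `N_A(X,Y)` -/
def nijV (A : V → V) : V → V → V := fun X Y =>
  M.bracket X Y + A (M.bracket (A X) Y) + A (M.bracket X (A Y)) - M.bracket (A X) (A Y)

/-- the Nijenhuis `(0,3)`-tensor `N_A(X,Y,Z) = g(X, N_A(Y,Z))` -/
def nij3 (A : V → V) : V → V → V → C := fun X Y Z => M.g X (M.nijV A Y Z)

/-- the induced inner product of two 2-forms,
`⟨ψ,φ⟩ = (1/2!) ψ(e_i,e_j) φ(e_i,e_j)` -/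
def inner2 (ψ φ : V → V → C) : C :=
  (1/2 : ℝ) • ∑ i, ∑ j, ψ (M.frame i) (M.frame j) * φ (M.frame i) (M.frame j)

/-- the contraction `(Λ_A β)(X) = ⟨X ⌟ β, ω_A⟩` of a three-form -/
def Lam (A : V → V) (β : V → V → V → C) : V → C :=
  fun X => (1/2 : ℝ) •
    ∑ i, ∑ j, β X (M.frame i) (M.frame j) * M.omega A (M.frame i) (M.frame j)

/-- `λ_I(X) = (1/2n) ⟨∇_X ω_J, ω_K⟩` -/
def lambdaI : V → C := fun X =>
  (1/(2*(n:ℝ))) • M.inner2 (fun Y Z => M.nab2 (M.omega M.J) X Y Z) (M.omega M.K)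

/-- `λ_J(X) = (1/2n) ⟨∇_X ω_K, ω_I⟩` -/
def lambdaJ : V → C := fun X =>
  (1/(2*(n:ℝ))) • M.inner2 (fun Y Z => M.nab2 (M.omega M.K) X Y Z) (M.omega M.I)

/-- `λ_K(X) = (1/2n) ⟨∇_X ω_I, ω_J⟩` -/
def lambdaK : V → C := fun X =>
  (1/(2*(n:ℝ))) • M.inner2 (fun Y Z => M.nab2 (M.omega M.I) X Y Z) (M.omega M.J)

/-- codifferential of a two-form -/
def codiff2 (ψ : V → V → C) : V → C := fun Z => -∑ i, M.nab2 ψ (M.frame i) (M.frame i) Z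

/-- codifferential of a four-form -/
def codiff4 (ψ : V → V → V → V → C) : V → V → V → C :=
  fun X Y Z => -∑ i, M.nab4 ψ (M.frame i) (M.frame i) X Y Z

/-- `β_I = J dω_J + K dω_K` -/
def betaI : V → V → V → C := fun X Y Z =>
  act3 M.J (M.d2 (M.omega M.J)) X Y Z + act3 M.K (M.d2 (M.omega M.K)) X Y Z

/-- `β_J = K dω_K + I dω_I` -/
def betaJ : V → V → V → C := fun X Y Z =>
  act3 M.K (M.d2 (M.omega M.K)) X Y Z + act3 M.I (M.d2 (M.omega M.I)) X Y Z

/-- `β_K = I dω_I + J dω_J` -/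
def betaK : V → V → V → C := fun X Y Z =>
  act3 M.I (M.d2 (M.omega M.I)) X Y Z + act3 M.J (M.d2 (M.omega M.J)) X Y Z

/-- the intrinsic torsion
`ξ_X Y = -(1/4) Σ_A A (∇_X A) Y + (1/2) Σ_A λ_A(X) A Y` -/
def xi : V → V → V := fun X Y =>
  (-(1/4 : ℝ)) • (M.I (M.nabA M.I X Y) + M.J (M.nabA M.J X Y) + M.K (M.nabA M.K X Y))
    + (1/2 : ℝ) • (M.lambdaI X • M.I Y + M.lambdaJ X • M.J Y + M.lambdaK X • M.K Y)

/-- the one-form `ν^I_4 = I Λ_I β_I` -/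
def nu4I : V → C := act1 M.I (M.Lam M.I M.betaI)

/-- the one-form `ν^J_4 = J Λ_J β_J` -/
def nu4J : V → C := act1 M.J (M.Lam M.J M.betaJ)

/-- the one-form `ν^K_4 = K Λ_K β_K` -/
def nu4K : V → C := act1 M.K (M.Lam M.K M.betaK)

/-- `ν^I_3`, determined by `J Λ_J β_I = (1/(2n-1)) (ν^I_4 + (2n+1)(n-1) ν^I_3)` -/
def nu3I : V → C := fun X =>
  (1/((2*(n:ℝ)+1) * ((n:ℝ)-1))) •
    ((2*(n:ℝ)-1) • act1 M.J (M.Lam M.J M.betaI) X - M.nu4I X)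

/-- `ν^J_3`, determined by `K Λ_K β_J = (1/(2n-1)) (ν^J_4 + (2n+1)(n-1) ν^J_3)` -/
def nu3J : V → C := fun X =>
  (1/((2*(n:ℝ)+1) * ((n:ℝ)-1))) •
    ((2*(n:ℝ)-1) • act1 M.K (M.Lam M.K M.betaJ) X - M.nu4J X)

/-- `ν^K_3`, determined by `I Λ_I β_K = (1/(2n-1)) (ν^K_4 + (2n+1)(n-1) ν^K_3)` -/
def nu3K : V → C := fun X =>
  (1/((2*(n:ℝ)+1) * ((n:ℝ)-1))) •
    ((2*(n:ℝ)-1) • act1 M.I (M.Lam M.I M.betaK) X - M.nu4K X)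

/-- `β^{(E)}_{3I} = -(1/2) Jν^I_3 ∧ ω_J - (1/2) Kν^I_3 ∧ ω_K + (1/(2n-1)) Iν^I_3 ∧ ω_I` -/
def betaE3I : V → V → V → C := fun X Y Z =>
  (-(1/2:ℝ)) • wedge12 (act1 M.J M.nu3I) (M.omega M.J) X Y Z
    + (-(1/2:ℝ)) • wedge12 (act1 M.K M.nu3I) (M.omega M.K) X Y Z
    + (1/(2*(n:ℝ)-1)) • wedge12 (act1 M.I M.nu3I) (M.omega M.I) X Y Z

def betaE3J : V → V → V → C := fun X Y Z =>
  (-(1/2:ℝ)) • wedge12 (act1 M.K M.nu3J) (M.omega M.K) X Y Z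
    + (-(1/2:ℝ)) • wedge12 (act1 M.I M.nu3J) (M.omega M.I) X Y Z
    + (1/(2*(n:ℝ)-1)) • wedge12 (act1 M.J M.nu3J) (M.omega M.J) X Y Z

def betaE3K : V → V → V → C := fun X Y Z =>
  (-(1/2:ℝ)) • wedge12 (act1 M.I M.nu3K) (M.omega M.I) X Y Z
    + (-(1/2:ℝ)) • wedge12 (act1 M.J M.nu3K) (M.omega M.J) X Y Z
    + (1/(2*(n:ℝ)-1)) • wedge12 (act1 M.K M.nu3K) (M.omega M.K) X Y Z

/-- `β_{4I} = -(1/(2n-1)) Iν^I_4 ∧ ω_I` -/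
def beta4I : V → V → V → C := fun X Y Z =>
  (-(1/(2*(n:ℝ)-1))) • wedge12 (act1 M.I M.nu4I) (M.omega M.I) X Y Z

def beta4J : V → V → V → C := fun X Y Z =>
  (-(1/(2*(n:ℝ)-1))) • wedge12 (act1 M.J M.nu4J) (M.omega M.J) X Y Z

def beta4K : V → V → V → C := fun X Y Z =>
  (-(1/(2*(n:ℝ)-1))) • wedge12 (act1 M.K M.nu4K) (M.omega M.K) X Y Z

/-- `β_I^{(3+K)} = β_I - β^{(E)}_{3I} - β_{4I}` -/
def beta3KI : V → V → V → C := fun X Y Z => M.betaI X Y Z - M.betaE3I X Y Z - M.beta4I X Y Z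

def beta3KJ : V → V → V → C := fun X Y Z => M.betaJ X Y Z - M.betaE3J X Y Z - M.beta4J X Y Z

def beta3KK : V → V → V → C := fun X Y Z => M.betaK X Y Z - M.betaE3K X Y Z - M.beta4K X Y Z

/-- `β_I^{(3)} = (1/6) (2 - 𝓛_J - 𝓛_K) β_I^{(3+K)}` -/
def beta3I : V → V → V → C := fun X Y Z =>
  (1/6:ℝ) • ((2:ℝ) • M.beta3KI X Y Z - calL M.J M.beta3KI X Y Z - calL M.K M.beta3KI X Y Z)

def beta3J : V → V → V → C := fun X Y Z =>
  (1/6:ℝ) • ((2:ℝ) • M.beta3KJ X Y Z - calL M.K M.beta3KJ X Y Z - calL M.I M.beta3KJ X Y Z)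

def beta3K : V → V → V → C := fun X Y Z =>
  (1/6:ℝ) • ((2:ℝ) • M.beta3KK X Y Z - calL M.I M.beta3KK X Y Z - calL M.J M.beta3KK X Y Z)

/-- `β_I^{(K)} = (1/6) (4 + 𝓛_J + 𝓛_K) β_I^{(3+K)}` -/
def betaKI : V → V → V → C := fun X Y Z =>
  (1/6:ℝ) • ((4:ℝ) • M.beta3KI X Y Z + calL M.J M.beta3KI X Y Z + calL M.K M.beta3KI X Y Z)

def betaKJ : V → V → V → C := fun X Y Z =>
  (1/6:ℝ) • ((4:ℝ) • M.beta3KJ X Y Z + calL M.K M.beta3KJ X Y Z + calL M.I M.beta3KJ X Y Z)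

def betaKK : V → V → V → C := fun X Y Z =>
  (1/6:ℝ) • ((4:ℝ) • M.beta3KK X Y Z + calL M.I M.beta3KK X Y Z + calL M.J M.beta3KK X Y Z)

/-- the three-form `ψ^{(3)} = (1/12)(β_I^{(3)} + β_J^{(3)} + β_K^{(3)})` determining `ξ_{33}` -/
def psi3 : V → V → V → C := fun X Y Z =>
  (1/12:ℝ) • (M.beta3I X Y Z + M.beta3J X Y Z + M.beta3K X Y Z)

/-- the three-form `ψ^{(K)} = -(1/48)(β_I^{(K)} + β_J^{(K)} + β_K^{(K)})` determining `ξ_{KH}` -/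
def psiK : V → V → V → C := fun X Y Z =>
  (-(1/48:ℝ)) • (M.betaKI X Y Z + M.betaKJ X Y Z + M.betaKK X Y Z)

/-- the three-form `ψ^{(3)}_I` determining `ξ_{3H}` -/
def psi3I : V → V → V → C := fun X Y Z =>
  (-(1/8:ℝ)) • M.beta3I X Y Z
    + (1/48:ℝ) • ((3:ℝ) • (M.beta3I X Y Z + M.beta3J X Y Z + M.beta3K X Y Z)
        + calL M.I (fun a b c => M.beta3I a b c + M.beta3J a b c + M.beta3K a b c) X Y Z)

def psi3J : V → V → V → C := fun X Y Z =>
  (-(1/8:ℝ)) • M.beta3J X Y Z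
    + (1/48:ℝ) • ((3:ℝ) • (M.beta3I X Y Z + M.beta3J X Y Z + M.beta3K X Y Z)
        + calL M.J (fun a b c => M.beta3I a b c + M.beta3J a b c + M.beta3K a b c) X Y Z)

def psi3K : V → V → V → C := fun X Y Z =>
  (-(1/8:ℝ)) • M.beta3K X Y Z
    + (1/48:ℝ) • ((3:ℝ) • (M.beta3I X Y Z + M.beta3J X Y Z + M.beta3K X Y Z)
        + calL M.K (fun a b c => M.beta3I a b c + M.beta3J a b c + M.beta3K a b c) X Y Z)

/-- the three-form `ψ^{(K)}_I` determining `ξ_{K3}` -/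
def psiKI : V → V → V → C := fun X Y Z =>
  (-(1/2:ℝ)) • M.betaKI X Y Z
    + (1/6:ℝ) • (M.betaKI X Y Z + M.betaKJ X Y Z + M.betaKK X Y Z)

def psiKJ : V → V → V → C := fun X Y Z =>
  (-(1/2:ℝ)) • M.betaKJ X Y Z
    + (1/6:ℝ) • (M.betaKI X Y Z + M.betaKJ X Y Z + M.betaKK X Y Z)

def psiKK : V → V → V → C := fun X Y Z =>
  (-(1/2:ℝ)) • M.betaKK X Y Z
    + (1/6:ℝ) • (M.betaKI X Y Z + M.betaKJ X Y Z + M.betaKK X Y Z)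

/-- the one-form `θ^ξ` determining `ξ_{EH}`,
defined by `(6/n)(2n+1)(n-1) θ^ξ(X) = -⟨ξ_{e_i} e_i, X⟩` -/
def thetaXi : V → C := fun X =>
  (-((n:ℝ)/(6*(2*(n:ℝ)+1)*((n:ℝ)-1)))) • ∑ i, M.g (M.xi (M.frame i) (M.frame i)) X

/-- the local one-form `θ^ξ_I`, defined by `(2/n)(2n+1)(n-1) θ^ξ_I(X) = -⟨I ξ_{e_i} I e_i, X⟩` -/
def thetaXiI : V → C := fun X =>
  (-((n:ℝ)/(2*(2*(n:ℝ)+1)*((n:ℝ)-1)))) •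
    ∑ i, M.g (M.I (M.xi (M.frame i) (M.I (M.frame i)))) X

def thetaXiJ : V → C := fun X =>
  (-((n:ℝ)/(2*(2*(n:ℝ)+1)*((n:ℝ)-1)))) •
    ∑ i, M.g (M.J (M.xi (M.frame i) (M.J (M.frame i)))) X

def thetaXiK : V → C := fun X =>
  (-((n:ℝ)/(2*(2*(n:ℝ)+1)*((n:ℝ)-1)))) •
    ∑ i, M.g (M.K (M.xi (M.frame i) (M.K (M.frame i)))) X

/-- `α_I = -λ_I ⊗ g + (1/2)(J_(2) - J_(3)) ∇ω_K` -/
def alphaI : V → V → V → C := fun X Y Z =>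
  -(M.lambdaI X * M.g Y Z)
    + (1/2:ℝ) • (-(M.nab2 (M.omega M.K) X (M.J Y) Z) + M.nab2 (M.omega M.K) X Y (M.J Z))

def alphaJ : V → V → V → C := fun X Y Z =>
  -(M.lambdaJ X * M.g Y Z)
    + (1/2:ℝ) • (-(M.nab2 (M.omega M.I) X (M.K Y) Z) + M.nab2 (M.omega M.I) X Y (M.K Z))

def alphaK : V → V → V → C := fun X Y Z =>
  -(M.lambdaK X * M.g Y Z)
    + (1/2:ℝ) • (-(M.nab2 (M.omega M.J) X (M.I Y) Z) + M.nab2 (M.omega M.J) X Y (M.I Z))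

/-- the one-form `η_I(X) = α_I(e_i; e_i, X)` -/
def etaI : V → C := fun X => ∑ i, M.alphaI (M.frame i) (M.frame i) X

def etaJ : V → C := fun X => ∑ i, M.alphaJ (M.frame i) (M.frame i) X

def etaK : V → C := fun X => ∑ i, M.alphaK (M.frame i) (M.frame i) X

/-- the fundamental four-form `Ω = Σ_A ω_A ∧ ω_A` -/
def Omega4 : V → V → V → V → C := fun X Y Z W =>
  wedge22 (M.omega M.I) (M.omega M.I) X Y Z W
    + wedge22 (M.omega M.J) (M.omega M.J) X Y Z W
    + wedge22 (M.omega M.K) (M.omega M.K) X Y Z W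

/-- the one-form `θ^{d*Ω} = (1/3) Σ_A A Λ_A d*Ω` -/
def thetaDOmega : V → C := fun X =>
  (1/3:ℝ) • (act1 M.I (M.Lam M.I (M.codiff4 M.Omega4)) X
    + act1 M.J (M.Lam M.J (M.codiff4 M.Omega4)) X
    + act1 M.K (M.Lam M.K (M.codiff4 M.Omega4)) X)

/-- the vector-valued torsion: `g(W, T(X,Y)) = T(W,X,Y)` -/
def Tvec (T : V → V → V → C) : V → V → V := fun X Y => ∑ i, T (M.frame i) X Y • M.frame i

/-- the connection `∇ + (1/2) T` associated to a torsion (0,3)-tensor `T` -/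
def nabT (T : V → V → V → C) : V → V → V := fun X Y => M.nab X Y + (1/2:ℝ) • M.Tvec T X Y

/-- a connection is metric -/
def MetricConn (nab' : V → V → V) : Prop :=
  ∀ X Y Z, M.D X (M.g Y Z) = M.g (nab' X Y) Z + M.g Y (nab' X Z)

/-- a connection is quaternionic, with associated local one-forms `γ_I, γ_J, γ_K`:
`∇'_X I = γ_K(X) J - γ_J(X) K`, and cyclically -/
def QuatConn (nab' : V → V → V) (γI γJ γK : V → C) : Prop :=
  (∀ X Y, nab' X (M.I Y) - M.I (nab' X Y) = γK X • M.J Y - γJ X • M.K Y) ∧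
  (∀ X Y, nab' X (M.J Y) - M.J (nab' X Y) = γI X • M.K Y - γK X • M.I Y) ∧
  (∀ X Y, nab' X (M.K Y) - M.K (nab' X Y) = γJ X • M.I Y - γI X • M.J Y)

/-- the HKT condition: `I, J, K` integrable and there is a metric connection
`∇ + (1/2)T` with totally skew torsion making `I, J, K` parallel -/
def IsHKT : Prop :=
  (∀ X Y, M.nijV M.I X Y = 0) ∧ (∀ X Y, M.nijV M.J X Y = 0) ∧
  (∀ X Y, M.nijV M.K X Y = 0) ∧
  ∃ T : V → V → V → C, IsAlt3 T ∧ Lin3 T ∧ M.MetricConn (M.nabT T) ∧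
    (∀ X Y, M.nabT T X (M.I Y) = M.I (M.nabT T X Y)) ∧
    (∀ X Y, M.nabT T X (M.J Y) = M.J (M.nabT T X Y)) ∧
    (∀ X Y, M.nabT T X (M.K Y) = M.K (M.nabT T X Y))

/-- membership of a three-form in `KH`: type `{2,1}` for each `A` and `Λ_A ψ = 0` -/
def InKH3 (ψ : V → V → V → C) : Prop :=
  IsAlt3 ψ ∧ Lin3 ψ ∧
  calL M.I ψ = ψ ∧ calL M.J ψ = ψ ∧ calL M.K ψ = ψ ∧
  M.Lam M.I ψ = 0 ∧ M.Lam M.J ψ = 0 ∧ M.Lam M.K ψ = 0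

/-- the `(0,3)`-tensor of the `KH`-component of the torsion determined by `ψ^{(K)}`:
`3ψ - Σ_A A_(23) ψ` -/
def xiKH3 (ψ : V → V → V → C) : V → V → V → C := fun X Y Z =>
  (3:ℝ) • ψ X Y Z - (op23 M.I ψ X Y Z + op23 M.J ψ X Y Z + op23 M.K ψ X Y Z)

/-- the `(0,3)`-tensor of the `EH`-component of the torsion determined by the
one-form `θ`: `3 e_i ⊗ e_i ∧ θ - Σ_A (e_i ⊗ A e_i ∧ A θ + (2/n) A θ ⊗ ω_A)` -/
def xiEH3 (θ : V → C) : V → V → V → C := fun X Y Z =>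
  (3:ℝ) • ∑ i, M.g (M.frame i) X *
      (M.g (M.frame i) Y * θ Z - M.g (M.frame i) Z * θ Y)
  - ((∑ i, M.g (M.frame i) X *
        (M.g (M.I (M.frame i)) Y * act1 M.I θ Z - M.g (M.I (M.frame i)) Z * act1 M.I θ Y))
    + (∑ i, M.g (M.frame i) X *
        (M.g (M.J (M.frame i)) Y * act1 M.J θ Z - M.g (M.J (M.frame i)) Z * act1 M.J θ Y))
    + (∑ i, M.g (M.frame i) X *
        (M.g (M.K (M.frame i)) Y * act1 M.K θ Z - M.g (M.K (M.frame i)) Z * act1 M.K θ Y)))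
  - (2/(n:ℝ)) • (act1 M.I θ X * M.omega M.I Y Z + act1 M.J θ X * M.omega M.J Y Z
      + act1 M.K θ X * M.omega M.K Y Z)

/-- the intrinsic torsion lies in `(K+E)H`: it is the sum of a `KH`-tensor and an
`EH`-tensor as described in §3 of the paper -/
def inKEH : Prop :=
  ∃ (ψ : V → V → V → C) (θ : V → C), M.InKH3 ψ ∧ Lin1 θ ∧
    ∀ X Y Z, M.g Y (M.xi X Z) = M.xiKH3 ψ X Y Z + M.xiEH3 θ X Y Z

end derived

end AQH

/-!
For a compatible almost complex structure `A`, the cyclic sum of its Nijenhuis tensor is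
`ψ - 𝓛_A ψ` with `ψ = A dω_A`, a multiple of the `{3,0}`-part of `ψ`. When `A` is integrable,
`A dω_A` is therefore of type `{2,1}`, and it is the torsion of the unique metric connection with
skew torsion preserving `A` (Bismut). Hence `M` is HKT exactly when `I, J, K` are integrable and
their Bismut torsions agree.

Suppose only that `I dω_I = J dω_J = K dω_K = ψ`. Writing the Nijenhuis tensor of `I` through `dω_J`
and `dω_K` (Hitchin) gives `N_I(Z,X,Y) = -P(JX,JY,Z)` with `P = ψ - 𝓛_I ψ`. Its cyclic sum is
`-𝓛_J P`, but also `P`. Since `𝓛_J` only has the eigenvalues `1` and `-3`, we get `P = 0`, hence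
`N_I = 0`, and cyclically `N_J = N_K = 0`.
-/

theorem isLinearMap_of_map_smul_add {R E F : Type*} [Semiring R] [AddCommMonoid E] [Module R E]
    [AddCommGroup F] [Module R F] {f : E → F}
    (hf : ∀ (c : R) x y, f (c • x + y) = c • f x + f y) : IsLinearMap R f := by
  have map_zero : f 0 = 0 := by simpa using hf 1 0 0
  exact ⟨fun x y => by simpa using hf 1 x y, fun c x => by simpa [map_zero] using hf c x 0⟩

theorem natCast_mul_cancel {C : Type*} [NonAssocRing C] [Module ℝ C] {m : ℕ} (hm : m ≠ 0) {x y : C}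
    (h : (m : C) * x = m * y) : x = y := by
  refine smul_right_injective C (Nat.cast_ne_zero.2 hm : (m : ℝ) ≠ 0) ?_
  simpa only [Nat.cast_smul_eq_nsmul, nsmul_eq_mul] using h

theorem two_mul_half_smul {C : Type*} [NonAssocSemiring C] [Module ℝ C] (x : C) :
    2 * ((1 / 2 : ℝ) • x) = x := by
  rw [two_mul, ← add_smul, add_halves, one_smul]

namespace AQH

section Forms

variable {C V : Type*} [CommRing C]

theorem IsAlt3.cyclic {T : V → V → V → C} (hT : IsAlt3 T) (X Y Z : V) : T Y Z X = T X Y Z := by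
  rw [hT.2 Y X Z, hT.1 X Y Z, neg_neg]

variable [AddCommGroup V] [Module C V]

theorem Lin3.isLinearMap {T : V → V → V → C} (hT : Lin3 T) (Y Z : V) :
    IsLinearMap C (T · Y Z) :=
  isLinearMap_of_map_smul_add fun f X X' => hT f X X' Y Z

theorem Lin3.neg_left {T : V → V → V → C} (hT : Lin3 T) (X Y Z : V) : T (-X) Y Z = -T X Y Z :=
  (hT.isLinearMap Y Z).map_neg X

theorem Lin3.sum_smul_left {T : V → V → V → C} (hT : Lin3 T) {ι : Type*} (s : Finset ι)
    (c : ι → C) (e : ι → V) (Y Z : V) :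
    T (∑ i ∈ s, c i • e i) Y Z = ∑ i ∈ s, c i * T (e i) Y Z :=
  (map_sum ((hT.isLinearMap Y Z).mk' _) _ s).trans
    (Finset.sum_congr rfl fun i _ => (hT.isLinearMap Y Z).map_smul (c i) (e i))

/-- An alternating `C`-bilinear form on vector fields. The predicate exists so that `d2` and `nab2`
can be studied for arbitrary two-forms rather than only for the Kähler forms. Linearity in the
second argument follows from skew-symmetry. -/
structure IsTwoForm (ψ : V → V → C) : Prop where
  skew : ∀ X Y, ψ Y X = -ψ X Y
  lin_left : ∀ (f : C) X X' Y, ψ (f • X + X') Y = f * ψ X Y + ψ X' Y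

namespace IsTwoForm

variable {ψ : V → V → C}

theorem lin_right (hψ : IsTwoForm ψ) (f : C) (X Y Y' : V) :
    ψ X (f • Y + Y') = f * ψ X Y + ψ X Y' := by
  rw [hψ.skew, hψ.lin_left, hψ.skew X Y, hψ.skew X Y']
  ring

theorem isLinearMap_left (hψ : IsTwoForm ψ) (Y : V) : IsLinearMap C (ψ · Y) :=
  isLinearMap_of_map_smul_add fun f X X' => hψ.lin_left f X X' Y

theorem sub_left (hψ : IsTwoForm ψ) (X X' Y : V) : ψ (X - X') Y = ψ X Y - ψ X' Y :=
  (hψ.isLinearMap_left Y).map_sub X X'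

end IsTwoForm

/-- A three-form: an alternating `(0,3)`-tensor. Linearity is only required in the first argument,
the others follow by alternation. -/
structure IsThreeForm (T : V → V → V → C) : Prop where
  alt : IsAlt3 T
  lin : Lin3 T

namespace IsThreeForm

variable {T : V → V → V → C} {A : V → V}

theorem lin_left (hT : IsThreeForm T) (f : C) (X X' Y Z : V) :
    T (f • X + X') Y Z = f * T X Y Z + T X' Y Z :=
  hT.lin f X X' Y Z

theorem neg_left (hT : IsThreeForm T) (X Y Z : V) : T (-X) Y Z = -T X Y Z :=
  hT.lin.neg_left X Y Z

theorem neg_mid (hT : IsThreeForm T) (X Y Z : V) : T X (-Y) Z = -T X Y Z := by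
  rw [hT.alt.1, hT.neg_left, hT.alt.1 X Y, neg_neg]

theorem neg_right (hT : IsThreeForm T) (X Y Z : V) : T X Y (-Z) = -T X Y Z := by
  rw [hT.alt.2, hT.neg_mid, hT.alt.2 X Z]

theorem sub {S : V → V → V → C} (hT : IsThreeForm T) (hS : IsThreeForm S) :
    IsThreeForm (T - S) where
  alt := by
    constructor <;> intro X Y Z <;> simp only [Pi.sub_apply]
    · rw [hT.alt.1 X Y, hS.alt.1 X Y]; ring
    · rw [hT.alt.2 X Y, hS.alt.2 X Y]; ring
  lin f X X' Y Z := by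
    simp only [Pi.sub_apply, hT.lin_left, hS.lin_left]
    ring

theorem act3 (hT : IsThreeForm T) (hA : ∀ (f : C) X Y, A (f • X + Y) = f • A X + A Y) :
    IsThreeForm (act3 A T) where
  alt := ⟨fun X Y Z => by simp only [AQH.act3, hT.alt.1 (A X) (A Y)],
    fun X Y Z => by simp only [AQH.act3, hT.alt.2 (A X) (A Y)]⟩
  lin f X X' Y Z := by
    simp only [AQH.act3, hA, hT.lin_left]
    ring

theorem act3_act3 (hT : IsThreeForm T) (hA : ∀ X, A (A X) = -X) (X Y Z : V) :
    AQH.act3 A (AQH.act3 A T) X Y Z = -T X Y Z := by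
  simp only [AQH.act3, hA, hT.neg_left, hT.neg_mid, hT.neg_right, neg_neg]

theorem calL (hT : IsThreeForm T) (hA : ∀ (f : C) X Y, A (f • X + Y) = f • A X + A Y) :
    IsThreeForm (calL A T) where
  alt := by
    constructor <;> intro X Y Z <;> simp only [AQH.calL, op12, op13, op23]
    · rw [hT.alt.1 (A X) (A Y), hT.alt.1 X (A Y), hT.alt.1 (A X) Y]; ring
    · rw [hT.alt.2 (A X) Y, hT.alt.2 (A X) (A Y), hT.alt.2 X (A Y)]; ring
  lin f X X' Y Z := by
    simp only [AQH.calL, op12, op13, op23, hA, hT.lin_left]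
    ring

theorem calL_calL (hT : IsThreeForm T) (hA : ∀ X, A (A X) = -X) (X Y Z : V) :
    AQH.calL A (AQH.calL A T) X Y Z = 3 * T X Y Z - 2 * AQH.calL A T X Y Z := by
  simp only [AQH.calL, op12, op13, op23, hA, hT.neg_left, hT.neg_mid, hT.neg_right]
  ring

theorem eq_zero_of_calL_eq_neg [Module ℝ C] (hT : IsThreeForm T) (hA : ∀ X, A (A X) = -X)
    (h : AQH.calL A T = -T) (X Y Z : V) : T X Y Z = 0 := by
  have quadratic := hT.calL_calL hA X Y Z
  have eigen : ∀ X Y Z, AQH.calL A T X Y Z = -T X Y Z := fun X Y Z => by rw [h]; rfl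
  have eigen_twice : AQH.calL A (AQH.calL A T) X Y Z = T X Y Z := by
    rw [h]
    simp only [AQH.calL, op12, op13, op23, Pi.neg_apply] at eigen ⊢
    linear_combination -eigen X Y Z
  refine natCast_mul_cancel four_ne_zero ?_
  push_cast
  linear_combination eigen_twice - quadratic + 2 * eigen X Y Z

end IsThreeForm

end Forms

section Geometry

variable {n : ℕ} {C V : Type*} [CommRing C] [Algebra ℝ C] [AddCommGroup V] [Module C V]
variable (M : AQH n C V)

/-- The metric as a bundled `C`-bilinear form, which makes the library lemmas on bilinear maps
available for `M.g`. -/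
def metric : LinearMap.BilinForm C V :=
  LinearMap.mk₂ C M.g M.g_add M.g_smul
    (fun X Y Z => by rw [M.g_symm, M.g_add, M.g_symm Y, M.g_symm Z])
    (fun f X Y => by rw [M.g_symm, M.g_smul, M.g_symm Y, smul_eq_mul])

theorem g_add_right (X Y Z : V) : M.g X (Y + Z) = M.g X Y + M.g X Z := map_add (M.metric X) Y Z

theorem g_sub_right (X Y Z : V) : M.g X (Y - Z) = M.g X Y - M.g X Z := map_sub (M.metric X) Y Z

theorem g_neg_right (X Y : V) : M.g X (-Y) = -M.g X Y := map_neg (M.metric X) Y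

theorem g_zero_right (X : V) : M.g X 0 = 0 := map_zero (M.metric X)

theorem eq_zero_of_g_eq_zero (X : V) (h : ∀ Z, M.g Z X = 0) : X = 0 := by
  rw [M.frame_span X]
  exact Finset.sum_eq_zero fun i _ => by rw [M.g_symm, h, zero_smul]

theorem D_neg (X : V) (f : C) : M.D X (-f) = -M.D X f :=
  (AddMonoidHom.mk' (M.D X) (M.D_add X)).map_neg f

theorem nab_neg (X Y : V) : M.nab X (-Y) = -M.nab X Y :=
  (AddMonoidHom.mk' (M.nab X) (M.nab_add X)).map_neg Y

namespace IsTwoForm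

variable {M} {ψ : V → V → C}

theorem nab2 (hψ : IsTwoForm ψ) (X : V) :
    IsTwoForm (M.nab2 ψ X) where
  skew Y Z := by
    simp only [AQH.nab2]
    rw [hψ.skew Y Z, hψ.skew Y (M.nab X Z), hψ.skew (M.nab X Y) Z, D_neg]
    ring
  lin_left f Y Y' Z := by
    simp only [AQH.nab2, M.nab_add, M.nab_leibniz, add_assoc, hψ.lin_left, M.D_add, M.D_mul]
    ring

theorem lin3_nab2 (hψ : IsTwoForm ψ) : Lin3 (M.nab2 ψ) :=
  fun f X X' Y Z => by
    simp only [AQH.nab2, M.D_addX, M.D_smulX, M.nab_addX, M.nab_smulX, hψ.lin_left, hψ.lin_right]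
    ring

theorem d2_eq_cyclic_sum_nab2 (hψ : IsTwoForm ψ) (X Y Z : V) :
    M.d2 ψ X Y Z = M.nab2 ψ X Y Z + M.nab2 ψ Y Z X + M.nab2 ψ Z X Y := by
  simp only [AQH.d2, AQH.nab2, ← M.torsion_free, hψ.sub_left]
  rw [hψ.skew X Z, D_neg, hψ.skew (M.nab X Z) Y, hψ.skew (M.nab Y X) Z, hψ.skew (M.nab Z Y) X]
  ring

theorem d2 (hψ : IsTwoForm ψ) : IsThreeForm (M.d2 ψ) where
  alt := by
    constructor <;> intro X Y Z <;>
    · rw [hψ.d2_eq_cyclic_sum_nab2, hψ.d2_eq_cyclic_sum_nab2, (hψ.nab2 X).skew Y Z,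
        (hψ.nab2 Y).skew Z X, (hψ.nab2 Z).skew X Y]
      ring
  lin f X X' Y Z := by
    have lin := hψ.lin3_nab2 (M := M) f X X' Y Z
    have lin_left := (hψ.nab2 (M := M) Z).lin_left f X X' Y
    have lin_right := (hψ.nab2 (M := M) Y).lin_right f Z X X'
    simp only [hψ.d2_eq_cyclic_sum_nab2]
    linear_combination lin + lin_left + lin_right

end IsTwoForm

/-- A `C`-linear almost complex structure `A` compatible with the metric of `M`. -/
structure IsAlmostHermitian (A : V → V) : Prop where
  lin : ∀ (f : C) X Y, A (f • X + Y) = f • A X + A Y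
  sq : ∀ X, A (A X) = -X
  metric : ∀ X Y, M.g (A X) (A Y) = M.g X Y

theorem nab2_omega (A : V → V) (X Y Z : V) :
    M.nab2 (M.omega A) X Y Z = M.g Y (M.nabA A X Z) := by
  simp only [nab2, omega, nabA, M.nab_metric, g_sub_right]
  ring

/-- The three-form `A dω_A`. It is the torsion of the Bismut connection of `A` when `A` is
integrable, but it is defined without that assumption. -/
def bismutTorsion (A : V → V) : V → V → V → C :=
  act3 A (M.d2 (M.omega A))

namespace IsAlmostHermitian

variable {M} {A : V → V}

theorem isLinearMap (hA : M.IsAlmostHermitian A) : IsLinearMap C A :=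
  isLinearMap_of_map_smul_add hA.lin

theorem map_neg (hA : M.IsAlmostHermitian A) (X : V) : A (-X) = -A X :=
  hA.isLinearMap.map_neg X

theorem map_sub (hA : M.IsAlmostHermitian A) (X Y : V) : A (X - Y) = A X - A Y :=
  hA.isLinearMap.map_sub X Y

theorem g_apply_left (hA : M.IsAlmostHermitian A) (X Y : V) : M.g (A X) Y = -M.g X (A Y) := by
  rw [← hA.metric X (A Y), hA.sq, g_neg_right, neg_neg]

theorem isTwoForm_omega (hA : M.IsAlmostHermitian A) : IsTwoForm (M.omega A) where
  skew X Y := by rw [omega, omega, M.g_symm, hA.g_apply_left]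
  lin_left f X X' Y := by simp only [omega, M.g_add, M.g_smul]

theorem nabA_apply (hA : M.IsAlmostHermitian A) (X Y : V) :
    M.nabA A X (A Y) = -A (M.nabA A X Y) := by
  simp only [nabA, hA.map_sub, hA.sq, nab_neg]
  abel

theorem nab2_omega_skew (hA : M.IsAlmostHermitian A) (X Y Z : V) :
    M.nab2 (M.omega A) X Z Y = -M.nab2 (M.omega A) X Y Z :=
  (hA.isTwoForm_omega.nab2 X).skew Y Z

theorem nab2_omega_apply_mid (hA : M.IsAlmostHermitian A) (X Y Z : V) :
    M.nab2 (M.omega A) X (A Y) Z = M.nab2 (M.omega A) X Y (A Z) := by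
  rw [nab2_omega, nab2_omega, hA.g_apply_left, hA.nabA_apply, g_neg_right]

theorem nab2_omega_neg_left (hA : M.IsAlmostHermitian A) (X Y Z : V) :
    M.nab2 (M.omega A) (-X) Y Z = -M.nab2 (M.omega A) X Y Z :=
  hA.isTwoForm_omega.lin3_nab2.neg_left X Y Z

theorem nab2_omega_neg_mid (hA : M.IsAlmostHermitian A) (X Y Z : V) :
    M.nab2 (M.omega A) X (-Y) Z = -M.nab2 (M.omega A) X Y Z :=
  ((hA.isTwoForm_omega.nab2 X).isLinearMap_left Z).map_neg Y

theorem nab2_omega_neg_right (hA : M.IsAlmostHermitian A) (X Y Z : V) :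
    M.nab2 (M.omega A) X Y (-Z) = -M.nab2 (M.omega A) X Y Z := by
  rw [hA.nab2_omega_skew, hA.nab2_omega_neg_mid, hA.nab2_omega_skew X Y Z, neg_neg]

theorem isThreeForm_bismutTorsion (hA : M.IsAlmostHermitian A) :
    IsThreeForm (M.bismutTorsion A) :=
  hA.isTwoForm_omega.d2.act3 hA.lin

theorem d2_omega_eq_bismutTorsion (hA : M.IsAlmostHermitian A) (X Y Z : V) :
    M.d2 (M.omega A) X Y Z = M.bismutTorsion A (A X) (A Y) (A Z) :=
  (neg_injective (hA.isTwoForm_omega.d2.act3_act3 hA.sq X Y Z)).symm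

theorem nijV_eq_nabA (hA : M.IsAlmostHermitian A) (X Y : V) :
    M.nijV A X Y
      = A (M.nabA A X Y) - A (M.nabA A Y X) - M.nabA A (A X) Y + M.nabA A (A Y) X := by
  simp only [nijV, nabA, ← M.torsion_free, hA.map_sub, hA.sq]
  abel

theorem nij3_eq_nab2_omega (hA : M.IsAlmostHermitian A) (X Y Z : V) :
    M.nij3 A Z X Y = M.nab2 (M.omega A) X Y (A Z) + M.nab2 (M.omega A) Y (A Z) X
      + M.nab2 (M.omega A) (A X) Y Z + M.nab2 (M.omega A) (A Y) Z X := by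
  rw [hA.nab2_omega_skew X (A Z) Y, hA.nab2_omega_skew (A X) Z Y]
  simp only [nij3, hA.nijV_eq_nabA, nab2_omega, hA.g_apply_left, g_add_right, g_sub_right]
  ring

theorem cyclic_sum_nij3 (hA : M.IsAlmostHermitian A) (X Y Z : V) :
    M.nij3 A X Y Z + M.nij3 A Y Z X + M.nij3 A Z X Y
      = M.bismutTorsion A X Y Z - calL A (M.bismutTorsion A) X Y Z := by
  have hd := hA.isTwoForm_omega.d2 (M := M)
  simp only [bismutTorsion, act3, calL, op12, op13, op23, hA.sq, hd.neg_left, hd.neg_mid,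
    hd.neg_right, hA.isTwoForm_omega.d2_eq_cyclic_sum_nab2, hA.nij3_eq_nab2_omega,
    hA.nab2_omega_apply_mid, hA.nab2_omega_neg_right]
  ring

theorem calL_bismutTorsion_of_nijV_eq_zero (hA : M.IsAlmostHermitian A)
    (hN : ∀ X Y, M.nijV A X Y = 0) : calL A (M.bismutTorsion A) = M.bismutTorsion A := by
  funext X Y Z
  have cyclic_sum := hA.cyclic_sum_nij3 X Y Z
  simp only [nij3, hN, g_zero_right] at cyclic_sum
  linear_combination cyclic_sum

theorem two_mul_nab2_omega (hA : M.IsAlmostHermitian A) (X Y Z : V) :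
    2 * M.nab2 (M.omega A) X Y Z = M.bismutTorsion A X (A Y) Z + M.bismutTorsion A X Y (A Z)
      - M.nij3 A Y Z (A X) - M.nij3 A Z (A X) Y := by
  have hd := hA.isTwoForm_omega.d2 (M := M)
  simp only [bismutTorsion, act3, hA.sq, hd.neg_mid, hd.neg_right,
    hA.isTwoForm_omega.d2_eq_cyclic_sum_nab2, hA.nij3_eq_nab2_omega, hA.nab2_omega_apply_mid,
    hA.nab2_omega_neg_left, hA.nab2_omega_neg_right]
  ring

end IsAlmostHermitian

variable {I J K : V → V}

/-- An almost hyperHermitian structure `(I, J, K = IJ)` for the metric of `M`. Unlike the fields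
`M.I, M.J, M.K`, the triple can be rotated cyclically while `M` is kept fixed. -/
structure IsHyperHermitianTriple (I J K : V → V) : Prop where
  left : M.IsAlmostHermitian I
  right : M.IsAlmostHermitian J
  comp : ∀ X, K X = I (J X)
  anticomm : ∀ X, I (J X) = -J (I X)

theorem isHyperHermitianTriple : M.IsHyperHermitianTriple M.I M.J M.K where
  left := ⟨M.I_lin, M.I_sq, M.I_metric⟩
  right := ⟨M.J_lin, M.J_sq, M.J_metric⟩
  comp := M.K_def
  anticomm := M.anticomm

namespace IsHyperHermitianTriple

variable {M}

theorem right_left (h : M.IsHyperHermitianTriple I J K) (X : V) : J (I X) = -I (J X) := by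
  rw [h.anticomm, neg_neg]

theorem third (h : M.IsHyperHermitianTriple I J K) : M.IsAlmostHermitian K where
  lin f X Y := by simp only [h.comp, h.right.lin, h.left.lin]
  sq X := by rw [h.comp, h.comp, h.right_left, h.left.map_neg, h.left.sq, neg_neg, h.right.sq]
  metric X Y := by rw [h.comp, h.comp, h.left.metric, h.right.metric]

theorem rotate (h : M.IsHyperHermitianTriple I J K) : M.IsHyperHermitianTriple J K I where
  left := h.right
  right := h.third
  comp X := by rw [h.comp, h.right_left, h.right.sq, h.left.map_neg, neg_neg]
  anticomm X := by rw [h.comp, h.comp, h.right_left]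

theorem nab2_omega_third (h : M.IsHyperHermitianTriple I J K) (X Y Z : V) :
    M.nab2 (M.omega K) X Y Z
      = M.nab2 (M.omega I) X Y (J Z) - M.nab2 (M.omega J) X (I Y) Z := by
  have nabA_third : M.nabA K X Z = M.nabA I X (J Z) + I (M.nabA J X Z) := by
    simp only [nabA, h.comp, h.left.map_sub]
    abel
  rw [nab2_omega, nab2_omega, nab2_omega, nabA_third, h.left.g_apply_left, g_add_right]
  ring

theorem nab2_omega_left_apply_mid (h : M.IsHyperHermitianTriple I J K) (X Y Z : V) :
    M.nab2 (M.omega I) X (J Y) Z = M.nab2 (M.omega I) X Y (J Z)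
      - M.nab2 (M.omega J) X (I Y) Z + M.nab2 (M.omega J) X Y (I Z) := by
  have skew := h.third.nab2_omega_skew X Y Z
  rw [h.nab2_omega_third, h.nab2_omega_third, h.left.nab2_omega_skew X (J Y) Z,
    h.right.nab2_omega_skew X Y (I Z)] at skew
  linear_combination -skew

theorem nij3_apply_eq_d2_omega (h : M.IsHyperHermitianTriple I J K) (X Y Z : V) :
    M.nij3 I (J Z) X Y = M.d2 (M.omega J) (I X) (I Y) Z - M.d2 (M.omega J) X Y Z
      + M.d2 (M.omega K) (I X) Y Z + M.d2 (M.omega K) X (I Y) Z := by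
  simp only [h.left.nij3_eq_nab2_omega, h.nab2_omega_left_apply_mid,
    h.right.isTwoForm_omega.d2_eq_cyclic_sum_nab2, h.third.isTwoForm_omega.d2_eq_cyclic_sum_nab2,
    h.nab2_omega_third, h.right_left, h.left.sq, h.left.nab2_omega_apply_mid,
    h.left.nab2_omega_neg_right, h.right.nab2_omega_neg_mid, h.right.nab2_omega_neg_right]
  ring

theorem nij3_eq_of_bismutTorsion_eq (h : M.IsHyperHermitianTriple I J K)
    {T : V → V → V → C} (hJ : M.bismutTorsion J = T) (hK : M.bismutTorsion K = T) (X Y Z : V) :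
    M.nij3 I Z X Y = -(T - calL I T) (J X) (J Y) Z := by
  have hT : IsThreeForm T := hJ ▸ h.right.isThreeForm_bismutTorsion
  have nij := h.nij3_apply_eq_d2_omega X Y (-J Z)
  rw [h.right.map_neg, h.right.sq, neg_neg] at nij
  simp only [nij, h.right.d2_omega_eq_bismutTorsion, h.third.d2_omega_eq_bismutTorsion, hJ, hK,
    Pi.sub_apply, calL, op12, op13, op23, h.comp, h.right_left, h.right.map_neg, h.left.map_neg,
    h.right.sq, h.left.sq, hT.neg_left, hT.neg_mid, neg_neg]
  ring

theorem calL_sub_calL_of_bismutTorsion_eq (h : M.IsHyperHermitianTriple I J K)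
    {T : V → V → V → C} (hI : M.bismutTorsion I = T) (hJ : M.bismutTorsion J = T)
    (hK : M.bismutTorsion K = T) : calL J (T - calL I T) = -(T - calL I T) := by
  have hT : IsThreeForm T := hI ▸ h.left.isThreeForm_bismutTorsion
  have hP := hT.sub (hT.calL h.left.lin)
  funext X Y Z
  have cyclic_sum := h.left.cyclic_sum_nij3 X Y Z
  simp only [h.nij3_eq_of_bismutTorsion_eq hJ hK, hI] at cyclic_sum
  rw [hP.alt.cyclic X (J Y) (J Z), ← hP.alt.cyclic (J Z) (J X) Y] at cyclic_sum
  simp only [AQH.calL, op12, op13, op23, Pi.neg_apply, Pi.sub_apply] at cyclic_sum ⊢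
  linear_combination -cyclic_sum

theorem nijV_eq_zero_of_bismutTorsion_eq (h : M.IsHyperHermitianTriple I J K)
    {T : V → V → V → C} (hI : M.bismutTorsion I = T) (hJ : M.bismutTorsion J = T)
    (hK : M.bismutTorsion K = T) (X Y : V) : M.nijV I X Y = 0 := by
  have hT : IsThreeForm T := hI ▸ h.left.isThreeForm_bismutTorsion
  have primitive_eq_zero := (hT.sub (hT.calL h.left.lin)).eq_zero_of_calL_eq_neg h.right.sq
    (h.calL_sub_calL_of_bismutTorsion_eq hI hJ hK)
  refine M.eq_zero_of_g_eq_zero _ fun Z => ?_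
  change M.nij3 I Z X Y = 0
  rw [h.nij3_eq_of_bismutTorsion_eq hJ hK, primitive_eq_zero, neg_zero]

end IsHyperHermitianTriple

variable {M} in
theorem g_Tvec {T : V → V → V → C} (hT : Lin3 T) (X Y Z : V) : M.g Z (M.Tvec T X Y) = T Z X Y := by
  conv_rhs => rw [M.frame_span Z, hT.sum_smul_left]
  refine (map_sum (M.metric Z) _ _).trans (Finset.sum_congr rfl fun i _ => ?_)
  rw [map_smul, smul_eq_mul, mul_comm]
  rfl

theorem beta_eq_iff_bismutTorsion_eq :
    (M.betaI = M.betaJ ∧ M.betaJ = M.betaK) ↔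
      (M.bismutTorsion M.I = M.bismutTorsion M.J ∧
        M.bismutTorsion M.J = M.bismutTorsion M.K) := by
  have betaI_eq : M.betaI = M.bismutTorsion M.J + M.bismutTorsion M.K := rfl
  have betaJ_eq : M.betaJ = M.bismutTorsion M.K + M.bismutTorsion M.I := rfl
  have betaK_eq : M.betaK = M.bismutTorsion M.I + M.bismutTorsion M.J := rfl
  rw [betaI_eq, betaJ_eq, betaK_eq, add_comm (M.bismutTorsion M.J), add_right_inj,
    add_comm (M.bismutTorsion M.K), add_right_inj, eq_comm,
    eq_comm (a := M.bismutTorsion M.K)]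

end Geometry

section SkewTorsion

variable {n : ℕ} {C V : Type*} [CommRing C] [Algebra ℝ C] [AddCommGroup V] [Module C V]
variable [Module ℝ V] [IsScalarTower ℝ C V] {M : AQH n C V} {A : V → V} {T : V → V → V → C}

theorem two_mul_g_nabT (hT : Lin3 T) (X Y Z : V) :
    2 * M.g Z (M.nabT T X Y) = 2 * M.g Z (M.nab X Y) + T Z X Y := by
  have g_half_smul (W : V) : M.g Z ((1 / 2 : ℝ) • W) = (1 / 2 : ℝ) • M.g Z W :=
    (M.metric Z).map_smul_of_tower (1 / 2 : ℝ) W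
  rw [nabT, g_add_right, g_half_smul, g_Tvec hT, mul_add, two_mul_half_smul]

theorem IsThreeForm.metricConn_nabT (hT : IsThreeForm T) : M.MetricConn (M.nabT T) := by
  intro X Y Z
  refine natCast_mul_cancel two_ne_zero ?_
  have left := two_mul_g_nabT (M := M) hT.lin X Y Z
  have right := two_mul_g_nabT (M := M) hT.lin X Z Y
  rw [M.nab_metric, M.g_symm (M.nab X Y), M.g_symm (M.nabT T X Y)]
  push_cast
  linear_combination hT.alt.cyclic Z X Y - hT.alt.1 X Y Z - left - right

namespace IsAlmostHermitian

theorem nabT_parallel_iff (hA : M.IsAlmostHermitian A) (hT : IsThreeForm T) :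
    (∀ X Y, M.nabT T X (A Y) = A (M.nabT T X Y)) ↔
      ∀ X Y Z, 2 * M.nab2 (M.omega A) X Y Z = T X (A Y) Z + T X Y (A Z) := by
  have defect (X Y Z : V) : 2 * M.g Y (M.nabT T X (A Z) - A (M.nabT T X Z))
      = 2 * M.nab2 (M.omega A) X Y Z - (T X (A Y) Z + T X Y (A Z)) := by
    have nabT_apply := two_mul_g_nabT (M := M) hT.lin X (A Z) Y
    have apply_nabT := two_mul_g_nabT (M := M) hT.lin X Z (A Y)
    rw [hA.g_apply_left, hA.g_apply_left, hT.alt.1] at apply_nabT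
    rw [hT.alt.1] at nabT_apply
    rw [nab2_omega, nabA, g_sub_right, g_sub_right]
    linear_combination nabT_apply + apply_nabT
  constructor
  · intro parallel X Y Z
    have defect_eq := defect X Y Z
    rw [parallel, sub_self, g_zero_right] at defect_eq
    linear_combination -defect_eq
  · intro two_mul_nab2 X Y
    refine sub_eq_zero.1 (M.eq_zero_of_g_eq_zero _ fun Z => natCast_mul_cancel two_ne_zero ?_)
    rw [Nat.cast_ofNat, defect, two_mul_nab2, sub_self, mul_zero]

theorem bismutTorsion_eq_calL_of_parallel (hA : M.IsAlmostHermitian A) (hT : IsThreeForm T)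
    (parallel : ∀ X Y, M.nabT T X (A Y) = A (M.nabT T X Y)) : M.bismutTorsion A = calL A T := by
  have two_mul_nab2 := (hA.nabT_parallel_iff hT).1 parallel
  funext X Y Z
  refine natCast_mul_cancel two_ne_zero ?_
  have nab_X := two_mul_nab2 (A X) (A Y) (A Z)
  have nab_Y := two_mul_nab2 (A Y) (A Z) (A X)
  have nab_Z := two_mul_nab2 (A Z) (A X) (A Y)
  simp only [hA.sq, hT.neg_mid, hT.neg_right] at nab_X nab_Y nab_Z
  simp only [bismutTorsion, act3, hA.isTwoForm_omega.d2_eq_cyclic_sum_nab2, calL, op12, op13, op23]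
  push_cast
  linear_combination -nab_X - nab_Y - nab_Z + hT.alt.cyclic X (A Y) (A Z)
    - hT.alt.cyclic (A Z) X (A Y) + hT.alt.cyclic (A X) (A Y) Z + hT.alt.cyclic (A X) Y (A Z)
    + hT.alt.cyclic Y (A Z) (A X)

theorem nabT_parallel_iff_bismutTorsion_eq (hA : M.IsAlmostHermitian A)
    (hN : ∀ X Y, M.nijV A X Y = 0) (hT : IsThreeForm T) :
    (∀ X Y, M.nabT T X (A Y) = A (M.nabT T X Y)) ↔ M.bismutTorsion A = T := by
  constructor
  · intro parallel
    have torsion_eq := hA.bismutTorsion_eq_calL_of_parallel hT parallel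
    have calL_calL_T := hA.calL_bismutTorsion_of_nijV_eq_zero hN
    rw [torsion_eq] at calL_calL_T ⊢
    funext X Y Z
    refine natCast_mul_cancel three_ne_zero ?_
    have quadratic := hT.calL_calL hA.sq X Y Z
    rw [calL_calL_T] at quadratic
    push_cast
    linear_combination quadratic
  · rintro rfl
    refine (hA.nabT_parallel_iff hT).2 fun X Y Z => ?_
    rw [hA.two_mul_nab2_omega, nij3, nij3, hN, hN, g_zero_right, g_zero_right, sub_zero, sub_zero]

end IsAlmostHermitian

variable (M) in
theorem isHKT_iff_bismutTorsion_eq :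
    M.IsHKT ↔ M.bismutTorsion M.I = M.bismutTorsion M.J ∧
      M.bismutTorsion M.J = M.bismutTorsion M.K := by
  have hI := M.isHyperHermitianTriple
  have hJ := hI.rotate
  have hK := hJ.rotate
  constructor
  · rintro ⟨nI, nJ, nK, T, alt, lin, -, pI, pJ, pK⟩
    have hT : IsThreeForm T := ⟨alt, lin⟩
    rw [(hI.left.nabT_parallel_iff_bismutTorsion_eq nI hT).1 pI,
      (hJ.left.nabT_parallel_iff_bismutTorsion_eq nJ hT).1 pJ,
      (hK.left.nabT_parallel_iff_bismutTorsion_eq nK hT).1 pK]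
    exact ⟨rfl, rfl⟩
  · rintro ⟨eqIJ, eqJK⟩
    have eqK := eqJK.symm
    have nI := hI.nijV_eq_zero_of_bismutTorsion_eq eqIJ rfl eqK
    have nJ := hJ.nijV_eq_zero_of_bismutTorsion_eq rfl eqK eqIJ
    have nK := hK.nijV_eq_zero_of_bismutTorsion_eq eqK eqIJ rfl
    have hT := hJ.left.isThreeForm_bismutTorsion
    exact ⟨nI, nJ, nK, M.bismutTorsion M.J, hT.alt, hT.lin, hT.metricConn_nabT,
      (hI.left.nabT_parallel_iff_bismutTorsion_eq nI hT).2 eqIJ,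
      (hJ.left.nabT_parallel_iff_bismutTorsion_eq nJ hT).2 rfl,
      (hK.left.nabT_parallel_iff_bismutTorsion_eq nK hT).2 eqK⟩

end SkewTorsion

end AQH

open AQH in
/-- For an almost hyperHermitian manifold `(M, I, J, K, g)` the
following are equivalent: (1) `M` is HKT; (2) `I dω_I = J dω_J = K dω_K`;
(3) `β_I = β_J = β_K`.  In particular, condition (2) alone implies the
integrability of `I`, `J` and `K`. -/
theorem statement9 {n : ℕ} {C V : Type*} [CommRing C] [Algebra ℝ C] [AddCommGroup V]
    [Module C V] [Module ℝ V] [IsScalarTower ℝ C V] (M : AQH n C V) :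
    (M.IsHKT ↔
      (act3 M.I (M.d2 (M.omega M.I)) = act3 M.J (M.d2 (M.omega M.J)) ∧
       act3 M.J (M.d2 (M.omega M.J)) = act3 M.K (M.d2 (M.omega M.K)))) ∧
    (M.IsHKT ↔ (M.betaI = M.betaJ ∧ M.betaJ = M.betaK)) ∧
    ((act3 M.I (M.d2 (M.omega M.I)) = act3 M.J (M.d2 (M.omega M.J)) ∧
      act3 M.J (M.d2 (M.omega M.J)) = act3 M.K (M.d2 (M.omega M.K))) →
      (∀ X Y, M.nijV M.I X Y = 0) ∧ (∀ X Y, M.nijV M.J X Y = 0) ∧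
      (∀ X Y, M.nijV M.K X Y = 0)) := by
  exact ⟨M.isHKT_iff_bismutTorsion_eq,
    M.isHKT_iff_bismutTorsion_eq.trans M.beta_eq_iff_bismutTorsion_eq.symm, fun h =>
      have ⟨nI, nJ, nK, _⟩ := M.isHKT_iff_bismutTorsion_eq.2 h
      ⟨nI, nJ, nK⟩⟩
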